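/- Affine upper bound for the fixed-φ function of V: for every real v ≥ 1.126983, one has (3v² − 1 + 3v·√(v(v−1)))/(3v + 1) ≤ 2.4427·v − 1.8194. -/

import Mathlib

/-!
Write `v = 1/(1 - t²)` with `0 ≤ t < 1`, so that `√(v(v-1)) = t v`. A factor `2 - t` then cancels
from the function, leaving `(1 + t + t²)/((1 - t)(2 + t))`, and comparison with `a v - b` becomes
non-negativity of the cubic `(b-1)(t³ + 2t²) + (a-b-2) t + (2(a-b) - 1)`. For `b ≥ 1` this is
convex on `t ≥ 0`, so replacing `t³ + 2t²` by a tangent line leaves two inequalities between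
constants.
-/

/-- The fixed-`φ` function of `V`, of interest for `v ≥ 1`; for `0 < v < 1` the square root takes
its junk value `0`. -/
noncomputable def fixedPhi (v : ℝ) : ℝ :=
  (3 * v ^ 2 - 1 + 3 * v * √(v * (v - 1))) / (3 * v + 1)

theorem exists_eq_inv_one_sub_sq {v : ℝ} (hv : 1 ≤ v) :
    ∃ t : ℝ, 0 ≤ t ∧ t < 1 ∧ v = (1 - t ^ 2)⁻¹ := by
  have hv_pos : 0 < v := by linarith
  have hinv : v⁻¹ ≤ 1 := inv_le_one_of_one_le₀ hv
  refine ⟨√(1 - v⁻¹), Real.sqrt_nonneg _, ?_, ?_⟩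
  · rw [Real.sqrt_lt' one_pos]
    linarith [inv_pos.mpr hv_pos]
  · rw [Real.sq_sqrt (sub_nonneg.mpr hinv), sub_sub_cancel, inv_inv]

theorem sqrt_inv_one_sub_sq_mul_sub_one {t : ℝ} (ht₀ : 0 ≤ t) (ht₁ : t < 1) :
    √((1 - t ^ 2)⁻¹ * ((1 - t ^ 2)⁻¹ - 1)) = t * (1 - t ^ 2)⁻¹ := by
  have hden : 0 < 1 - t ^ 2 := by nlinarith
  rw [show (1 - t ^ 2)⁻¹ * ((1 - t ^ 2)⁻¹ - 1) = (t * (1 - t ^ 2)⁻¹) ^ 2 by field_simp; ring]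
  exact Real.sqrt_sq (by positivity)

theorem fixedPhi_inv_one_sub_sq {t : ℝ} (ht₀ : 0 ≤ t) (ht₁ : t < 1) :
    fixedPhi (1 - t ^ 2)⁻¹ = (1 + t + t ^ 2) / ((1 - t) * (2 + t)) := by
  have hden : 0 < 1 - t ^ 2 := by nlinarith
  have hleft : 3 * (1 - t ^ 2)⁻¹ + 1 ≠ 0 := by positivity
  have hright : (1 - t) * (2 + t) ≠ 0 := (mul_pos (sub_pos.mpr ht₁) (by positivity)).ne'
  rw [fixedPhi, sqrt_inv_one_sub_sq_mul_sub_one ht₀ ht₁, div_eq_div_iff hleft hright]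
  field_simp
  ring

theorem fixedPhi_inv_one_sub_sq_le_iff {t : ℝ} (ht₀ : 0 ≤ t) (ht₁ : t < 1) (a b : ℝ) :
    fixedPhi (1 - t ^ 2)⁻¹ ≤ a * (1 - t ^ 2)⁻¹ - b ↔
      0 ≤ (b - 1) * (t ^ 3 + 2 * t ^ 2) + (a - b - 2) * t + (2 * (a - b) - 1) := by
  have hsub : 0 < 1 - t := sub_pos.mpr ht₁
  have hden : 0 < 1 - t ^ 2 := by nlinarith
  have hdiff : a * (1 - t ^ 2)⁻¹ - b - fixedPhi (1 - t ^ 2)⁻¹ =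
      ((b - 1) * (t ^ 3 + 2 * t ^ 2) + (a - b - 2) * t + (2 * (a - b) - 1)) /
        ((1 - t ^ 2) * (2 + t)) := by
    rw [fixedPhi_inv_one_sub_sq ht₀ ht₁]
    field_simp
    ring
  rw [← sub_nonneg, hdiff, le_div_iff₀ (by positivity), zero_mul]

theorem tangent_le_cube_add_two_mul_sq {s t : ℝ} (h : 0 ≤ t + 2 * s + 2) :
    (3 * s ^ 2 + 4 * s) * t - 2 * s ^ 2 * (s + 1) ≤ t ^ 3 + 2 * t ^ 2 := by
  have hgap : t ^ 3 + 2 * t ^ 2 - ((3 * s ^ 2 + 4 * s) * t - 2 * s ^ 2 * (s + 1)) =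
      (t - s) ^ 2 * (t + 2 * s + 2) := by ring
  rw [← sub_nonneg, hgap]
  exact mul_nonneg (sq_nonneg _) h

theorem fixedPhi_le_affine {v a b s : ℝ} (hv : 1 ≤ v) (hs : -1 ≤ s) (hb : 1 ≤ b)
    (hlinear : 0 ≤ (b - 1) * (3 * s ^ 2 + 4 * s) + (a - b - 2))
    (hconst : (b - 1) * (2 * s ^ 2 * (s + 1)) ≤ 2 * (a - b) - 1) :
    fixedPhi v ≤ a * v - b := by
  obtain ⟨t, ht₀, ht₁, rfl⟩ := exists_eq_inv_one_sub_sq hv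
  rw [fixedPhi_inv_one_sub_sq_le_iff ht₀ ht₁]
  calc
    0 ≤ ((b - 1) * (3 * s ^ 2 + 4 * s) + (a - b - 2)) * t +
        (2 * (a - b) - 1 - (b - 1) * (2 * s ^ 2 * (s + 1))) :=
      add_nonneg (mul_nonneg hlinear ht₀) (sub_nonneg.mpr hconst)
    _ = (b - 1) * ((3 * s ^ 2 + 4 * s) * t - 2 * s ^ 2 * (s + 1)) +
        (a - b - 2) * t + (2 * (a - b) - 1) := by ring
    _ ≤ (b - 1) * (t ^ 3 + 2 * t ^ 2) + (a - b - 2) * t + (2 * (a - b) - 1) := by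
      gcongr
      exact tangent_le_cube_add_two_mul_sq (by linarith)

theorem affine_bound_fixed_phi_general (v : ℝ) (hv : 1 ≤ v) :
    (3 * v ^ 2 - 1 + 3 * v * Real.sqrt (v * (v - 1))) / (3 * v + 1) ≤
      2.4427 * v - 1.8194 := by
  -- `0.3356` approximates the minimiser of the cubic, a root of `3s² + 4s = 1.3767 / 0.8194`.
  refine fixedPhi_le_affine (s := 0.3356) hv ?_ ?_ ?_ ?_ <;> norm_num

/-- affine upper bound for the fixed-`φ` function of `V`: for every real
`v ≥ 1.126983`, `(3v² − 1 + 3v√(v(v−1)))/(3v + 1) ≤ 2.4427 v − 1.8194`. -/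
theorem affine_bound_fixed_phi (v : ℝ) (hv : 1.126983 ≤ v) :
    (3 * v ^ 2 - 1 + 3 * v * Real.sqrt (v * (v - 1))) / (3 * v + 1) ≤
      2.4427 * v - 1.8194 :=
  affine_bound_fixed_phi_general v (by linarith)
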